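/- Let (X₁,T₁) and (X₂,T₂) be dynamical systems admitting a common subsystem (Y,T): that is, for i = 1,2 there is a closed T_i-invariant subset Y_i ⊆ X_i and a homeomorphism φ_i : Y → Y_i with φ_i ∘ T = T_i ∘ φ_i. Suppose there exists an ergodic T-invariant Borel probability measure μ on Y whose support contains at least two points, and suppose that for every pair of periodic points x₁ ∈ X₁ and x₂ ∈ X₂, the least period of x₁ (under T₁) and the least period of x₂ (under T₂) are coprime. Then the product system (X₁ × X₂, T₁ × T₂) does not have dense periodic measures. -/

import Mathlib

open MeasureTheory Topology

/-- A dynamical system `(X,T)` has *dense periodic measures* if the finitely supported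
`T`-invariant Borel probability measures are dense (in the weak-* topology) in the space of
all `T`-invariant Borel probability measures. -/
def DensePeriodicMeasures {X : Type*} [TopologicalSpace X] [MeasurableSpace X]
    [OpensMeasurableSpace X] (T : X → X) : Prop :=
  ∀ μ : ProbabilityMeasure X, μ.toMeasure.map T = μ.toMeasure →
    μ ∈ closure {ν : ProbabilityMeasure X |
      ν.toMeasure.map T = ν.toMeasure ∧ ∃ s : Finset X, ν.toMeasure ↑s = 1}

/-- The support of a measure. -/
def msupport {X : Type*} [TopologicalSpace X] [MeasurableSpace X]
    (μ : MeasureTheory.Measure X) : Set X :=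
  {x : X | ∀ O : Set X, IsOpen O → x ∈ O → 0 < μ O}

/-!
A finitely supported measure that is invariant under `T₁ × T₂` lives on pairs of periodic points.
Their periods being coprime, by the Chinese remainder theorem each such pair is the image under
`T₁ × id` of a point of its own `T₁ × T₂`-orbit, where the measure has at least as much mass, so
the measure is also invariant under `T₁ × id`. This is a closed condition, so if these measures
were dense, every `T₁ × T₂`-invariant measure would satisfy it. For the image of `μ` under `y ↦
(φ₁ y, φ₂ y)` it says `μ (T⁻¹ U ∩ V) = μ (U ∩ V)` for `U` open and `V` closed in `Y`; with `V =
Uᶜ`, every open set is `T`-invariant up to a null set. By ergodicity open sets have measure `0` or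
`1`, which leaves room for only one point in the support.
-/

open Function Set

section Atoms

variable {X : Type*} [MeasurableSpace X] [MeasurableSingletonClass X]

theorem measure_le_of_forall_measure_singleton_le {ν ρ : Measure X} {s : Set X}
    (hs : s.Countable) (hνs : ∀ᵐ x ∂ν, x ∈ s) (h : ∀ x, ν {x} ≤ ρ {x}) : ν ≤ ρ := by
  refine Measure.le_intro fun A _ _ ↦ ?_
  have sum_atoms (κ : Measure X) : ∑' x : ↥(A ∩ s), κ {(x : X)} = κ (A ∩ s) :=
    tsum_measure_preimage_singleton (f := id) (hs.mono inter_subset_right)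
      fun x _ ↦ measurableSet_singleton x
  calc
    ν A = ν (A ∩ s) := (measure_inter_conull hνs).symm
    _ = ∑' x : ↥(A ∩ s), ν {(x : X)} := (sum_atoms ν).symm
    _ ≤ ∑' x : ↥(A ∩ s), ρ {(x : X)} := ENNReal.tsum_le_tsum fun x ↦ h x
    _ = ρ (A ∩ s) := sum_atoms ρ
    _ ≤ ρ A := measure_mono inter_subset_left

variable {ν : Measure X} {f : X → X}

theorem measure_singleton_le_measure_singleton_iterate (hf : MeasurePreserving f ν ν) (n : ℕ)
    (x : X) : ν {x} ≤ ν {f^[n] x} :=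
  calc
    ν {x} ≤ ν (f^[n] ⁻¹' {f^[n] x}) := measure_mono (by simp)
    _ = ν {f^[n] x} :=
      (hf.iterate n).measure_preimage (measurableSet_singleton _).nullMeasurableSet

theorem mem_periodicPts_of_measure_singleton_ne_zero [IsFiniteMeasure ν]
    (hf : MeasurePreserving f ν ν) {x : X} (hx : ν {x} ≠ 0) : x ∈ periodicPts f := by
  obtain ⟨_, rfl, n, hn, hreturn⟩ :=
    hf.exists_mem_iterate_mem (measurableSet_singleton x).nullMeasurableSet hx
  exact mk_mem_periodicPts (Nat.pos_of_ne_zero hn) hreturn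

end Atoms

section CoprimePeriods

/-- Every least period of `f` is coprime to every least period of `g`. The restriction to periodic
points matters, because `minimalPeriod` is `0` at the other ones. -/
def CoprimePeriods {X₁ X₂ : Type*} (f : X₁ → X₁) (g : X₂ → X₂) : Prop :=
  ∀ x₁ ∈ periodicPts f, ∀ x₂ ∈ periodicPts g, (minimalPeriod f x₁).Coprime (minimalPeriod g x₂)

variable {X₁ X₂ : Type*} {f : X₁ → X₁} {g : X₂ → X₂}

theorem exists_iterate_eq_iterate_and_iterate_eq_iterate {x₁ : X₁} {x₂ : X₂}
    (h : (minimalPeriod f x₁).Coprime (minimalPeriod g x₂)) (a b : ℕ) :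
    ∃ k, f^[k] x₁ = f^[a] x₁ ∧ g^[k] x₂ = g^[b] x₂ := by
  obtain ⟨k, hka, hkb⟩ := Nat.chineseRemainder h a b
  refine ⟨k, ?_, ?_⟩
  · rw [← iterate_mod_minimalPeriod_eq, hka, iterate_mod_minimalPeriod_eq]
  · rw [← iterate_mod_minimalPeriod_eq, hkb, iterate_mod_minimalPeriod_eq]

theorem CoprimePeriods.exists_prodMap_id_iterate_eq (h : CoprimePeriods f g) {x : X₁ × X₂}
    (hx : x ∈ periodicPts (Prod.map f g)) :
    ∃ k, Prod.map f id ((Prod.map f g)^[k] x) = x := by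
  obtain ⟨x₁, x₂⟩ := x
  obtain ⟨n, hn, hper⟩ := hx
  obtain ⟨m, rfl⟩ := Nat.exists_eq_add_one.2 hn
  obtain ⟨hper₁, hper₂⟩ := (isPeriodicPt_prodMap _).1 hper
  obtain ⟨k, hk₁, hk₂⟩ := exists_iterate_eq_iterate_and_iterate_eq_iterate
    (h x₁ ⟨m + 1, hn, hper₁⟩ x₂ ⟨m + 1, hn, hper₂⟩) m 0
  have hpred : f (f^[m] x₁) = x₁ := (iterate_succ_apply' f m x₁).symm.trans hper₁
  exact ⟨k, by simp [Prod.map_iterate, hk₁, hk₂, hpred]⟩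

theorem CoprimePeriods.measurePreserving_prodMap_id
    [MeasurableSpace X₁] [MeasurableSpace X₂] [MeasurableSingletonClass (X₁ × X₂)]
    (h : CoprimePeriods f g) (hf : Measurable f) {ν : Measure (X₁ × X₂)} [IsProbabilityMeasure ν]
    (hν : MeasurePreserving (Prod.map f g) ν ν) {s : Set (X₁ × X₂)} (hs : s.Countable)
    (hνs : ∀ᵐ x ∂ν, x ∈ s) : MeasurePreserving (Prod.map f id) ν ν := by
  have hfid : Measurable (Prod.map f (id : X₂ → X₂)) := hf.prodMap measurable_id
  have : IsProbabilityMeasure (ν.map (Prod.map f id)) :=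
    Measure.isProbabilityMeasure_map hfid.aemeasurable
  suffices hle : ν ≤ ν.map (Prod.map f id) from
    ⟨hfid, (Measure.eq_of_le_of_isProbabilityMeasure hle).symm⟩
  refine measure_le_of_forall_measure_singleton_le hs hνs fun x ↦ ?_
  rcases eq_or_ne (ν {x}) 0 with hx | hx
  · simp [hx]
  obtain ⟨k, hk⟩ :=
    h.exists_prodMap_id_iterate_eq (mem_periodicPts_of_measure_singleton_ne_zero hν hx)
  calc
    ν {x} ≤ ν {(Prod.map f g)^[k] x} := measure_singleton_le_measure_singleton_iterate hν k x
    _ ≤ ν (Prod.map f id ⁻¹' {x}) := measure_mono (singleton_subset_iff.2 hk)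
    _ = ν.map (Prod.map f id) {x} :=
      (Measure.map_apply hfid (measurableSet_singleton x)).symm

end CoprimePeriods

theorem isClosed_setOf_measurePreserving {X : Type*} [TopologicalSpace X] [MeasurableSpace X]
    [BorelSpace X] [HasOuterApproxClosed X] {f : X → X} (hf : Continuous f) :
    IsClosed {ν : ProbabilityMeasure X | MeasurePreserving f ν.toMeasure ν.toMeasure} := by
  have hclosed : IsClosed {ν : ProbabilityMeasure X | ν.map hf.aemeasurable = ν} :=
    isClosed_eq (ProbabilityMeasure.continuous_map hf) continuous_id
  convert hclosed using 3 with ν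
  exact ⟨fun h ↦ Subtype.ext h.map_eq, fun h ↦ ⟨hf.measurable, congrArg Subtype.val h⟩⟩

section ProductSystem

variable {X₁ X₂ : Type*}
  [TopologicalSpace X₁] [TopologicalSpace.MetrizableSpace X₁] [MeasurableSpace X₁] [BorelSpace X₁]
  [TopologicalSpace X₂] [TopologicalSpace.MetrizableSpace X₂] [MeasurableSpace X₂] [BorelSpace X₂]
  [SecondCountableTopologyEither X₁ X₂] {T₁ : X₁ → X₁} {T₂ : X₂ → X₂}

theorem DensePeriodicMeasures.measurePreserving_prodMap_id
    (hdense : DensePeriodicMeasures (Prod.map T₁ T₂)) (hcoprime : CoprimePeriods T₁ T₂)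
    (hT₁ : Continuous T₁) {ρ : Measure (X₁ × X₂)} [IsProbabilityMeasure ρ]
    (hρ : MeasurePreserving (Prod.map T₁ T₂) ρ ρ) : MeasurePreserving (Prod.map T₁ id) ρ ρ := by
  have hclosed := isClosed_setOf_measurePreserving (hT₁.prodMap (continuous_id (X := X₂)))
  refine closure_minimal ?_ hclosed (hdense ⟨ρ, ‹_›⟩ hρ.map_eq)
  rintro ν ⟨hν, s, hs⟩
  exact hcoprime.measurePreserving_prodMap_id hT₁.measurable ⟨hρ.measurable, hν⟩
    s.countable_toSet ((mem_ae_iff_prob_eq_one s.measurableSet).2 hs)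

end ProductSystem

section GraphJoining

variable {X₁ X₂ Y : Type*} [MeasurableSpace X₁] [MeasurableSpace X₂] [MeasurableSpace Y]
  {T₁ : X₁ → X₁} {T₂ : X₂ → X₂} {T : Y → Y} {φ₁ : Y → X₁} {φ₂ : Y → X₂} {μ : Measure Y}

theorem measurePreserving_prodMap_map_prodMk (hφ₁ : Semiconj φ₁ T T₁) (hφ₂ : Semiconj φ₂ T T₂)
    (hφ₁m : Measurable φ₁) (hφ₂m : Measurable φ₂) (hT₁ : Measurable T₁) (hT₂ : Measurable T₂)
    (hT : MeasurePreserving T μ μ) :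
    MeasurePreserving (Prod.map T₁ T₂) (μ.map fun y ↦ (φ₁ y, φ₂ y))
      (μ.map fun y ↦ (φ₁ y, φ₂ y)) :=
  MeasurePreserving.of_semiconj ((hφ₁m.prodMk hφ₂m).measurePreserving μ) hT
    (fun y ↦ Prod.ext (hφ₁ y) (hφ₂ y)) (hT₁.prodMap hT₂)

theorem measure_preimage_preimage_inter_preimage (hφ₁ : Semiconj φ₁ T T₁)
    (hφ₁m : Measurable φ₁) (hφ₂m : Measurable φ₂)
    (h : MeasurePreserving (Prod.map T₁ id) (μ.map fun y ↦ (φ₁ y, φ₂ y))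
      (μ.map fun y ↦ (φ₁ y, φ₂ y)))
    {A : Set X₁} (hA : MeasurableSet A) {B : Set X₂} (hB : MeasurableSet B) :
    μ (T ⁻¹' (φ₁ ⁻¹' A) ∩ φ₂ ⁻¹' B) = μ (φ₁ ⁻¹' A ∩ φ₂ ⁻¹' B) := by
  have hφ : Measurable fun y ↦ (φ₁ y, φ₂ y) := hφ₁m.prodMk hφ₂m
  have hcomp := (h.comp (hφ.measurePreserving μ)).measure_preimage (hA.prod hB).nullMeasurableSet
  rw [Measure.map_apply hφ (hA.prod hB)] at hcomp
  have hpre : T ⁻¹' (φ₁ ⁻¹' A) = φ₁ ⁻¹' (T₁ ⁻¹' A) := by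
    rw [← preimage_comp, hφ₁.comp_eq, preimage_comp]
  rw [hpre]
  exact hcomp

theorem preimage_ae_le_of_isOpen [TopologicalSpace X₁] [OpensMeasurableSpace X₁]
    [TopologicalSpace X₂] [OpensMeasurableSpace X₂] [TopologicalSpace Y]
    (hφ₁ : Semiconj φ₁ T T₁) (hφ₁m : Measurable φ₁) (hφ₂m : Measurable φ₂)
    (hφ₁i : IsInducing φ₁) (hφ₂i : IsInducing φ₂)
    (h : MeasurePreserving (Prod.map T₁ id) (μ.map fun y ↦ (φ₁ y, φ₂ y))
      (μ.map fun y ↦ (φ₁ y, φ₂ y)))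
    {U : Set Y} (hU : IsOpen U) : T ⁻¹' U ≤ᵐ[μ] U := by
  obtain ⟨A, hA, rfl⟩ := hφ₁i.isOpen_iff.1 hU
  obtain ⟨B, hB, hBA⟩ := hφ₂i.isOpen_iff.1 hU
  rw [ae_le_set, sdiff_eq]
  calc
    μ (T ⁻¹' (φ₁ ⁻¹' A) ∩ (φ₁ ⁻¹' A)ᶜ) = μ (T ⁻¹' (φ₁ ⁻¹' A) ∩ φ₂ ⁻¹' Bᶜ) := by
      rw [preimage_compl, hBA]
    _ = μ (φ₁ ⁻¹' A ∩ φ₂ ⁻¹' Bᶜ) :=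
      measure_preimage_preimage_inter_preimage hφ₁ hφ₁m hφ₂m h hA.measurableSet
        hB.measurableSet.compl
    _ = 0 := by rw [preimage_compl, hBA, inter_compl_self, measure_empty]

end GraphJoining

theorem subsingleton_msupport_of_preimage_ae_le {Y : Type*} [TopologicalSpace Y] [T2Space Y]
    [MeasurableSpace Y] [OpensMeasurableSpace Y] {T : Y → Y} {μ : Measure Y} [IsFiniteMeasure μ]
    (hT : Ergodic T μ) (h : ∀ U, IsOpen U → T ⁻¹' U ≤ᵐ[μ] U) : (msupport μ).Subsingleton := by
  intro p hp q hq
  by_contra hpq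
  obtain ⟨U, V, hU, hV, hpU, hqV, hUV⟩ := t2_separation hpq
  have hUpos : 0 < μ U := hp U hU hpU
  have hVpos : 0 < μ V := hq V hV hqV
  rcases hT.ae_empty_or_univ_of_preimage_ae_le hU.measurableSet.nullMeasurableSet (h U hU)
    with hnull | hfull
  · exact hUpos.ne' (ae_eq_empty.1 hnull)
  · exact hVpos.ne' (measure_mono_null hUV.subset_compl_left (ae_eq_univ.1 hfull))

theorem product_not_densePeriodicMeasures_of_common_subsystem_general
    {X₁ X₂ Y : Type*}
    [TopologicalSpace X₁] [TopologicalSpace.MetrizableSpace X₁]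
    [MeasurableSpace X₁] [BorelSpace X₁]
    [TopologicalSpace X₂] [TopologicalSpace.MetrizableSpace X₂]
    [MeasurableSpace X₂] [BorelSpace X₂] [SecondCountableTopologyEither X₁ X₂]
    [TopologicalSpace Y] [MeasurableSpace Y] [OpensMeasurableSpace Y]
    {T₁ : X₁ → X₁} {T₂ : X₂ → X₂} {T : Y → Y} (hT₁ : Continuous T₁) (hT₂ : Measurable T₂)
    {φ₁ : Y → X₁} {φ₂ : Y → X₂} (hφ₁e : IsEmbedding φ₁) (hφ₂e : IsEmbedding φ₂)
    (hφ₁ : Semiconj φ₁ T T₁) (hφ₂ : Semiconj φ₂ T T₂)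
    {μ : Measure Y} [IsProbabilityMeasure μ] (hμ : Ergodic T μ)
    (hsupp : (msupport μ).Nontrivial) (hcoprime : CoprimePeriods T₁ T₂) :
    ¬ DensePeriodicMeasures (Prod.map T₁ T₂) := by
  intro hdense
  have hφ₁m : Measurable φ₁ := hφ₁e.continuous.measurable
  have hφ₂m : Measurable φ₂ := hφ₂e.continuous.measurable
  have : T2Space Y := hφ₁e.t2Space
  have : IsProbabilityMeasure (μ.map fun y ↦ (φ₁ y, φ₂ y)) :=
    Measure.isProbabilityMeasure_map (hφ₁m.prodMk hφ₂m).aemeasurable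
  have hinv := hdense.measurePreserving_prodMap_id hcoprime hT₁ <|
    measurePreserving_prodMap_map_prodMk hφ₁ hφ₂ hφ₁m hφ₂m hT₁.measurable hT₂
      hμ.toMeasurePreserving
  refine hsupp.not_subsingleton (subsingleton_msupport_of_preimage_ae_le hμ fun U hU ↦ ?_)
  exact preimage_ae_le_of_isOpen hφ₁ hφ₁m hφ₂m hφ₁e.isInducing hφ₂e.isInducing hinv hU

/-- If two systems `(X₁,T₁)`, `(X₂,T₂)` have a common subsystem `(Y,T)` carrying an ergodic
invariant measure supported on at least two points, and the least periods of periodic points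
of `X₁` are coprime to those of `X₂`, then the product system has no dense periodic
measures. -/
theorem product_not_densePeriodicMeasures_of_common_subsystem
    {X₁ X₂ Y : Type*}
    [TopologicalSpace X₁] [CompactSpace X₁] [TopologicalSpace.MetrizableSpace X₁]
    [SecondCountableTopology X₁] [MeasurableSpace X₁] [BorelSpace X₁]
    [TopologicalSpace X₂] [CompactSpace X₂] [TopologicalSpace.MetrizableSpace X₂]
    [SecondCountableTopology X₂] [MeasurableSpace X₂] [BorelSpace X₂]
    [TopologicalSpace Y] [CompactSpace Y] [TopologicalSpace.MetrizableSpace Y]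
    [MeasurableSpace Y] [BorelSpace Y]
    (T₁ : X₁ ≃ₜ X₁) (T₂ : X₂ ≃ₜ X₂) (T : Y ≃ₜ Y)
    (Y₁ : Set X₁) (Y₂ : Set X₂) (hY₁closed : IsClosed Y₁) (hY₂closed : IsClosed Y₂)
    (hY₁inv : ⇑T₁ '' Y₁ = Y₁) (hY₂inv : ⇑T₂ '' Y₂ = Y₂)
    (φ₁ : Y ≃ₜ Y₁) (φ₂ : Y ≃ₜ Y₂)
    (hφ₁ : ∀ y : Y, (φ₁ (T y) : X₁) = T₁ (φ₁ y : X₁))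
    (hφ₂ : ∀ y : Y, (φ₂ (T y) : X₂) = T₂ (φ₂ y : X₂))
    (μ : Measure Y) (hμp : IsProbabilityMeasure μ) (hμerg : Ergodic ⇑T μ)
    (hsupp : ∃ p q : Y, p ∈ msupport μ ∧ q ∈ msupport μ ∧ p ≠ q)
    (hcoprime : ∀ (x₁ : X₁) (x₂ : X₂),
      (∃ n : ℕ, 0 < n ∧ (⇑T₁)^[n] x₁ = x₁) → (∃ n : ℕ, 0 < n ∧ (⇑T₂)^[n] x₂ = x₂) →
      Nat.Coprime (Function.minimalPeriod ⇑T₁ x₁) (Function.minimalPeriod ⇑T₂ x₂)) :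
    ¬ DensePeriodicMeasures (fun p : X₁ × X₂ => (T₁ p.1, T₂ p.2)) := by
  obtain ⟨p, q, hp, hq, hpq⟩ := hsupp
  exact product_not_densePeriodicMeasures_of_common_subsystem_general T₁.continuous
    T₂.measurable (IsEmbedding.subtypeVal.comp φ₁.isEmbedding)
    (IsEmbedding.subtypeVal.comp φ₂.isEmbedding) hφ₁ hφ₂ hμerg ⟨p, hp, q, hq, hpq⟩
    fun x₁ hx₁ x₂ hx₂ ↦ hcoprime x₁ x₂ hx₁ hx₂
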